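/- Let N ≥ 3 be an integer, α ∈ (0,N) a real number, and let w : ℝ^N → ℝ be a continuously differentiable function with compact support. Then ∫_{ℝ^N} ∫_{ℝ^N} |x − y|^{α−N} w(y) ⟨x, ∇w(x)⟩ dy dx = −((N+α)/2) ∫_{ℝ^N} ∫_{ℝ^N} |x − y|^{α−N} w(x) w(y) dy dx. -/

import Mathlib

open MeasureTheory

/-!
Euler's identity for homogeneous functions has a weak form for non-smooth functions: if `K` is
locally integrable and positively homogeneous of degree `s` on a `d`-dimensional space, then a
change of variables gives `∫ K(x) Φ(t x) dx = t ^ (-(s + d)) ∫ K Φ`, and differentiating at `t = 1`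
yields `∫ K(x) DΦ(x)x dx = -(s + d) ∫ K Φ` for every `C¹` compactly supported `Φ`.

The Riesz kernel `K(x, y) = |x - y| ^ (α - N)` is such a function on `ℝ^N × ℝ^N`, with
`s + d = α + N`. For `Φ(x, y) = w(x) w(y)` the derivative `DΦ(x, y)(x, y)` is a sum of two terms
that are exchanged by `(x, y) ↦ (y, x)`, whence the factor `1 / 2`.
-/

open Metric Module Set

/-- Positive homogeneity of real degree `s`, the scaling behaviour of Riesz-type kernels. Only
dilations by `t > 0` are involved, so that `‖x‖ ^ s` qualifies for every `s`. -/
def PosHomogeneous {V : Type*} [SMul ℝ V] (k : V → ℝ) (s : ℝ) : Prop :=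
  ∀ ⦃t : ℝ⦄, 0 < t → ∀ x, k (t • x) = t ^ s * k x

theorem PosHomogeneous.comp_linearMap {V W : Type*} [AddCommMonoid V] [Module ℝ V]
    [AddCommMonoid W] [Module ℝ W] {k : V → ℝ} {s : ℝ} (hk : PosHomogeneous k s) (L : W →ₗ[ℝ] V) :
    PosHomogeneous (fun x ↦ k (L x)) s := by
  intro t ht x
  simp only [map_smul, hk ht]

theorem posHomogeneous_norm_rpow {V : Type*} [SeminormedAddCommGroup V] [NormedSpace ℝ V]
    (s : ℝ) : PosHomogeneous (fun x : V ↦ ‖x‖ ^ s) s := by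
  intro t ht x
  simp only [norm_smul, Real.norm_of_nonneg ht.le, Real.mul_rpow ht.le (norm_nonneg x)]

section Dilation

variable {V F : Type*} [NormedAddCommGroup V] [NormedSpace ℝ V] [NormedAddCommGroup F]

theorem exists_norm_comp_smul_le_indicator {G : V → F} (hG : Continuous G)
    (hsupp : HasCompactSupport G) {a : ℝ} (ha : 0 < a) :
    ∃ C r : ℝ, ∀ t ≥ a, ∀ x, ‖G (t • x)‖ ≤ (closedBall 0 r).indicator (fun _ ↦ C) x := by
  obtain ⟨C, hC⟩ := hsupp.exists_bound_of_continuous hG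
  obtain ⟨R, hR⟩ := hsupp.isCompact.isBounded.subset_closedBall 0
  refine ⟨C, R / a, fun t ht x ↦ ?_⟩
  by_cases hx : x ∈ closedBall 0 (R / a)
  · simpa only [indicator_of_mem hx] using hC (t • x)
  · have htx : t • x ∉ tsupport G := by
      intro hmem
      have hle : t * ‖x‖ ≤ R := by
        simpa [norm_smul, abs_of_pos (ha.trans_le ht)] using hR hmem
      refine hx (mem_closedBall_zero_iff.2 ((le_div_iff₀' ha).2 (le_trans ?_ hle)))
      gcongr
    simp only [indicator_of_notMem hx, image_eq_zero_of_notMem_tsupport htx, norm_zero, le_refl]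

variable [NormedSpace ℝ F]

theorem hasDerivAt_comp_smul_const {Φ : V → F} {t : ℝ} {x : V}
    (hΦ : DifferentiableAt ℝ Φ (t • x)) :
    HasDerivAt (fun t : ℝ ↦ Φ (t • x)) (fderiv ℝ Φ (t • x) x) t := by
  have hsmul : HasDerivAt (fun t : ℝ ↦ t • x) x t := by
    simpa using (hasDerivAt_id t).smul_const x
  exact hΦ.hasFDerivAt.comp_hasDerivAt t hsmul

theorem hasCompactSupport_fderiv_apply_self {Φ : V → F} (hΦ : HasCompactSupport Φ) :
    HasCompactSupport fun x ↦ fderiv ℝ Φ x x :=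
  (hΦ.fderiv ℝ).mono fun x hx hzero ↦ hx (by simp [hzero])

theorem continuous_fderiv_apply_self {Φ : V → F} (hΦ : ContDiff ℝ 1 Φ) :
    Continuous fun x ↦ fderiv ℝ Φ x x :=
  (hΦ.continuous_fderiv one_ne_zero).clm_apply continuous_id

theorem exists_norm_fderiv_smul_apply_le_indicator {Φ : V → F} (hΦ : ContDiff ℝ 1 Φ)
    (hsupp : HasCompactSupport Φ) {a : ℝ} (ha : 0 < a) :
    ∃ C r : ℝ, ∀ t ≥ a, ∀ x,
      ‖fderiv ℝ Φ (t • x) x‖ ≤ (closedBall 0 r).indicator (fun _ ↦ C) x := by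
  obtain ⟨C, r, hbound⟩ := exists_norm_comp_smul_le_indicator (continuous_fderiv_apply_self hΦ)
    (hasCompactSupport_fderiv_apply_self hsupp) ha
  refine ⟨a⁻¹ * C, r, fun t ht x ↦ ?_⟩
  have ht0 : 0 < t := ha.trans_le ht
  calc ‖fderiv ℝ Φ (t • x) x‖
      = t⁻¹ * ‖fderiv ℝ Φ (t • x) (t • x)‖ := by
        rw [map_smul, norm_smul, Real.norm_of_nonneg ht0.le, inv_mul_cancel_left₀ ht0.ne']
    _ ≤ a⁻¹ * (closedBall 0 r).indicator (fun _ ↦ C) x := by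
        gcongr
        exact hbound t ht x
    _ = (closedBall 0 r).indicator (fun _ ↦ a⁻¹ * C) x := by
        rw [indicator_const_mul]

variable [FiniteDimensional ℝ V] [MeasurableSpace V] [BorelSpace V] {ν : Measure V} {k : V → ℝ}

theorem hasDerivAt_integral_smul_comp_smul (hk : LocallyIntegrable k ν) {Φ : V → F}
    (hΦ : ContDiff ℝ 1 Φ) (hsupp : HasCompactSupport Φ) :
    HasDerivAt (fun t : ℝ ↦ ∫ x, k x • Φ (t • x) ∂ν) (∫ x, k x • fderiv ℝ Φ x x ∂ν) 1 := by
  obtain ⟨C, r, hC⟩ :=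
    exists_norm_fderiv_smul_apply_le_indicator hΦ hsupp (one_half_pos (α := ℝ))
  have hΦ_dilated (t : ℝ) : Continuous fun x ↦ Φ (t • x) :=
    hΦ.continuous.comp (continuous_const_smul t)
  have hint_bound : Integrable (fun x ↦ ‖k x‖ * (closedBall 0 r).indicator (fun _ ↦ C) x) ν := by
    have hball : IntegrableOn (fun x ↦ ‖k x‖ * C) (closedBall 0 r) ν :=
      ((hk.integrableOn_isCompact (isCompact_closedBall 0 r)).norm).mul_const C
    exact (hball.integrable_indicator measurableSet_closedBall).congr
      (.of_forall fun x ↦ indicator_mul_right _ _ _)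
  have hint_Φ : Integrable (fun x ↦ k x • Φ x) ν :=
    hk.integrable_smul_right_of_hasCompactSupport hΦ.continuous hsupp
  have hmeas_fderiv : AEStronglyMeasurable (fun x ↦ k x • fderiv ℝ Φ x x) ν :=
    hk.aestronglyMeasurable.smul (continuous_fderiv_apply_self hΦ).aestronglyMeasurable
  have hderiv := hasDerivAt_integral_of_dominated_loc_of_deriv_le (𝕜 := ℝ) (μ := ν)
    (F := fun t x ↦ k x • Φ (t • x)) (F' := fun t x ↦ k x • fderiv ℝ Φ (t • x) x)
    (Ici_mem_nhds one_half_lt_one)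
    (.of_forall fun t ↦ hk.aestronglyMeasurable.smul (hΦ_dilated t).aestronglyMeasurable)
    (by simpa only [one_smul] using hint_Φ)
    (by simpa only [one_smul] using hmeas_fderiv)
    (.of_forall fun x t ht ↦ (norm_smul_le _ _).trans
      (mul_le_mul_of_nonneg_left (hC t ht x) (norm_nonneg _)))
    hint_bound
    (.of_forall fun x t _ ↦
      (hasDerivAt_comp_smul_const (hΦ.differentiable one_ne_zero _)).const_smul _)
  simpa only [one_smul] using hderiv.2

variable [ν.IsAddHaarMeasure] {s : ℝ}

theorem PosHomogeneous.integral_smul_comp_smul (hk : PosHomogeneous k s) (Φ : V → F) {t : ℝ}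
    (ht : 0 < t) :
    ∫ x, k x • Φ (t • x) ∂ν = t ^ (-(s + finrank ℝ V)) • ∫ x, k x • Φ x ∂ν := by
  have hk_dilated (x : V) : k x = t ^ (-s) * k (t • x) := by
    rw [hk ht, ← mul_assoc, ← Real.rpow_add ht, neg_add_cancel, Real.rpow_zero, one_mul]
  calc ∫ x, k x • Φ (t • x) ∂ν
      = t ^ (-s) • ∫ x, k (t • x) • Φ (t • x) ∂ν := by
        rw [← integral_smul]
        exact integral_congr_ae (.of_forall fun x ↦ by simp only [hk_dilated x, mul_smul])
    _ = t ^ (-s) • (t ^ finrank ℝ V)⁻¹ • ∫ x, k x • Φ x ∂ν := by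
        rw [Measure.integral_comp_smul_of_nonneg ν (fun x ↦ k x • Φ x) t (hR := ht.le)]
    _ = t ^ (-(s + finrank ℝ V)) • ∫ x, k x • Φ x ∂ν := by
        rw [smul_smul, ← Real.rpow_natCast, ← Real.rpow_neg ht.le, ← Real.rpow_add ht, neg_add]

theorem PosHomogeneous.integral_smul_fderiv_apply_self (hk : PosHomogeneous k s)
    (hk_int : LocallyIntegrable k ν) {Φ : V → F} (hΦ : ContDiff ℝ 1 Φ)
    (hsupp : HasCompactSupport Φ) :
    ∫ x, k x • fderiv ℝ Φ x x ∂ν = -(s + finrank ℝ V) • ∫ x, k x • Φ x ∂ν := by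
  have hpow : HasDerivAt (fun t : ℝ ↦ t ^ (-(s + finrank ℝ V)) • ∫ x, k x • Φ x ∂ν)
      (-(s + finrank ℝ V) • ∫ x, k x • Φ x ∂ν) 1 := by
    simpa using (Real.hasDerivAt_rpow_const (p := -(s + finrank ℝ V))
      (.inl one_ne_zero)).smul_const (∫ x, k x • Φ x ∂ν)
  refine (hasDerivAt_integral_smul_comp_smul hk_int hΦ hsupp).unique
    (hpow.congr_of_eventuallyEq ?_)
  filter_upwards [Ioi_mem_nhds one_pos] with t ht
  exact hk.integral_smul_comp_smul Φ ht

end Dilation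

section DifferenceKernel

theorem locallyIntegrable_comp_sub {G F : Type*} [AddGroup G] [TopologicalSpace G]
    [IsTopologicalAddGroup G] [SecondCountableTopology G] [MeasurableSpace G] [BorelSpace G]
    [NormedAddCommGroup F] {μ ν : Measure G} [SFinite μ] [μ.IsAddRightInvariant] [SFinite ν]
    [IsLocallyFiniteMeasure ν] {k : G → F} (hk : LocallyIntegrable k μ) :
    LocallyIntegrable (fun p : G × G ↦ k (p.1 - p.2)) (μ.prod ν) := by
  intro p
  obtain ⟨U, hU, hk_U⟩ := hk (p.1 - p.2)
  obtain ⟨O, hOU, hO, hpO⟩ := mem_nhds_iff.1 hU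
  obtain ⟨B, hpB, hB, hB_finite⟩ := ν.exists_isOpen_measure_lt_top p.2
  have : IsFiniteMeasure (ν.restrict B) := isFiniteMeasure_restrict.2 hB_finite.ne
  have hprod : IntegrableOn (fun q : G × G ↦ k q.1) (O ×ˢ B) (μ.prod ν) := by
    rw [IntegrableOn, ← Measure.prod_restrict]
    exact (hk_U.mono_set hOU).comp_fst (ν.restrict B)
  have hshear := (measurePreserving_sub_prod μ ν).restrict_preimage
    (hO.measurableSet.prod hB.measurableSet)
  refine ⟨_, ?_, hshear.integrable_comp_of_integrable hprod⟩
  exact ((hO.prod hB).preimage (by fun_prop)).mem_nhds ⟨hpO, hpB⟩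

theorem integral_comp_sub_mul_mul_comm {G : Type*} [AddGroup G] [MeasurableSpace G] {μ : Measure G}
    [SFinite μ] {k f g : G → ℝ} (hk_even : k.Even) :
    ∫ p : G × G, k (p.1 - p.2) * (f p.1 * g p.2) ∂μ.prod μ =
      ∫ p : G × G, k (p.1 - p.2) * (g p.1 * f p.2) ∂μ.prod μ := by
  rw [← integral_prod_swap]
  refine integral_congr_ae (.of_forall fun p ↦ ?_)
  simp only [Prod.fst_swap, Prod.snd_swap, ← neg_sub p.1 p.2, hk_even _, mul_comm (f p.2)]

theorem hasCompactSupport_mul_prod {X Y : Type*} [TopologicalSpace X] [TopologicalSpace Y]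
    {f : X → ℝ} {g : Y → ℝ} (hf : HasCompactSupport f) (hg : HasCompactSupport g) :
    HasCompactSupport fun p : X × Y ↦ f p.1 * g p.2 := by
  refine HasCompactSupport.intro' (hf.isCompact.prod hg.isCompact)
    ((isClosed_tsupport f).prod (isClosed_tsupport g)) fun p hp ↦ ?_
  rcases not_and_or.1 hp with hfst | hsnd
  · rw [image_eq_zero_of_notMem_tsupport hfst, zero_mul]
  · rw [image_eq_zero_of_notMem_tsupport hsnd, mul_zero]

variable {E : Type*} [NormedAddCommGroup E] [NormedSpace ℝ E]

theorem fderiv_mul_prod_apply_self {E' : Type*} [NormedAddCommGroup E'] [NormedSpace ℝ E']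
    {f : E → ℝ} {g : E' → ℝ} {p : E × E'} (hf : DifferentiableAt ℝ f p.1)
    (hg : DifferentiableAt ℝ g p.2) :
    fderiv ℝ (fun p : E × E' ↦ f p.1 * g p.2) p p =
      fderiv ℝ f p.1 p.1 * g p.2 + f p.1 * fderiv ℝ g p.2 p.2 := by
  have hprod := (hf.hasFDerivAt.comp p hasFDerivAt_fst).mul (hg.hasFDerivAt.comp p hasFDerivAt_snd)
  rw [HasFDerivAt.fderiv (f := fun p : E × E' ↦ f p.1 * g p.2) hprod]
  simp only [Function.comp_apply, add_apply, smul_apply, ContinuousLinearMap.comp_apply,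
    ContinuousLinearMap.coe_snd', smul_eq_mul, ContinuousLinearMap.coe_fst']
  ring

variable [FiniteDimensional ℝ E] [MeasurableSpace E] [BorelSpace E]
  {μ : Measure E} [μ.IsAddHaarMeasure]

theorem locallyIntegrable_norm_rpow {s : ℝ} (hs : -(finrank ℝ E : ℝ) < s) :
    LocallyIntegrable (fun x : E ↦ ‖x‖ ^ s) μ := by
  rcases subsingleton_or_nontrivial E with _ | _
  · exact (continuous_of_const fun x y ↦ by rw [Subsingleton.elim x y]).locallyIntegrable
  · refine locallyIntegrable_of_norm_le_rpow (C := 1) (α := -s) finrank_pos (by linarith)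
      (.of_forall fun x ↦ ?_) (measurable_norm.pow_const s).aestronglyMeasurable
    rw [neg_neg, one_mul, Real.norm_of_nonneg (by positivity)]

variable {k f g : E → ℝ}

theorem integrable_comp_sub_mul_mul (hk : LocallyIntegrable k μ) (hf : Continuous f)
    (hf_supp : HasCompactSupport f) (hg : Continuous g) (hg_supp : HasCompactSupport g) :
    Integrable (fun p : E × E ↦ k (p.1 - p.2) * (f p.1 * g p.2)) (μ.prod μ) :=
  (locallyIntegrable_comp_sub hk).integrable_smul_right_of_hasCompactSupport
    (by fun_prop) (hasCompactSupport_mul_prod hf_supp hg_supp)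

variable {s : ℝ}

theorem PosHomogeneous.integral_comp_sub_mul_fderiv_add (hk : PosHomogeneous k s)
    (hk_int : LocallyIntegrable k μ) (hf : ContDiff ℝ 1 f) (hf_supp : HasCompactSupport f)
    (hg : ContDiff ℝ 1 g) (hg_supp : HasCompactSupport g) :
    ∫ p : E × E, k (p.1 - p.2) *
        (fderiv ℝ f p.1 p.1 * g p.2 + f p.1 * fderiv ℝ g p.2 p.2) ∂μ.prod μ =
      -(s + 2 * finrank ℝ E) * ∫ p : E × E, k (p.1 - p.2) * (f p.1 * g p.2) ∂μ.prod μ := by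
  have heuler := (hk.comp_linearMap (LinearMap.fst ℝ E E - LinearMap.snd ℝ E E))
    |>.integral_smul_fderiv_apply_self (locallyIntegrable_comp_sub (ν := μ) hk_int)
      (Φ := fun p ↦ f p.1 * g p.2) (by fun_prop) (hasCompactSupport_mul_prod hf_supp hg_supp)
  simpa only [fderiv_mul_prod_apply_self (hf.differentiable one_ne_zero _)
    (hg.differentiable one_ne_zero _), finrank_prod, ← two_mul, Nat.cast_mul, Nat.cast_ofNat,
    smul_eq_mul, LinearMap.sub_apply, LinearMap.fst_apply, LinearMap.snd_apply] using heuler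

theorem PosHomogeneous.integral_integral_comp_sub_mul_fderiv {w : E → ℝ}
    (hk : PosHomogeneous k s) (hk_even : k.Even) (hk_int : LocallyIntegrable k μ)
    (hw : ContDiff ℝ 1 w) (hsupp : HasCompactSupport w) :
    ∫ x, ∫ y, k (x - y) * w y * fderiv ℝ w x x ∂μ ∂μ =
      -((s + 2 * finrank ℝ E) / 2) * ∫ x, ∫ y, k (x - y) * w x * w y ∂μ ∂μ := by
  have hDw := continuous_fderiv_apply_self hw
  have hDw_supp := hasCompactSupport_fderiv_apply_self hsupp
  have hint_ww := integrable_comp_sub_mul_mul hk_int hw.continuous hsupp hw.continuous hsupp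
  have hint_Dw_w := integrable_comp_sub_mul_mul hk_int hDw hDw_supp hw.continuous hsupp
  have hint_w_Dw := integrable_comp_sub_mul_mul hk_int hw.continuous hsupp hDw hDw_supp
  have hsum := hk.integral_comp_sub_mul_fderiv_add hk_int hw hsupp hw hsupp
  simp only [mul_add] at hsum
  rw [integral_add hint_Dw_w hint_w_Dw,
    integral_comp_sub_mul_mul_comm (f := w) (g := fun x ↦ fderiv ℝ w x x) hk_even,
    integral_prod _ hint_Dw_w, integral_prod _ hint_ww] at hsum
  simp only [mul_assoc, mul_comm (w _) (fderiv ℝ w _ _)]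
  linarith

end DifferenceKernel

theorem riesz_kernel_pohozaev_general {E : Type*} [NormedAddCommGroup E] [InnerProductSpace ℝ E]
    [FiniteDimensional ℝ E] [MeasurableSpace E] [BorelSpace E] {μ : Measure E}
    [μ.IsAddHaarMeasure] {α : ℝ} (hα : 0 < α) {w : E → ℝ} (hw : ContDiff ℝ 1 w)
    (hsupp : HasCompactSupport w) :
    ∫ x, ∫ y, ‖x - y‖ ^ (α - finrank ℝ E) * w y * inner ℝ x (gradient w x) ∂μ ∂μ =
      -((finrank ℝ E + α) / 2) *
        ∫ x, ∫ y, ‖x - y‖ ^ (α - finrank ℝ E) * w x * w y ∂μ ∂μ := by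
  have hdegree : α - finrank ℝ E + 2 * finrank ℝ E = finrank ℝ E + α := by ring
  have heven : (fun x : E ↦ ‖x‖ ^ (α - finrank ℝ E)).Even := fun x ↦ by simp only [norm_neg]
  simpa only [hdegree, inner_gradient_right, conj_trivial] using
    (posHomogeneous_norm_rpow (α - finrank ℝ E)).integral_integral_comp_sub_mul_fderiv heven
      (locallyIntegrable_norm_rpow (μ := μ) (by linarith)) hw hsupp

/-- Symmetrization identity for the Riesz kernel:
∫∫ |x−y|^{α−N} w(y) (x·∇w(x)) = −((N+α)/2) ∫∫ |x−y|^{α−N} w(x) w(y),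
for C¹ compactly supported w (Proposition 4.1 of the paper). -/
theorem riesz_kernel_pohozaev
    (N : ℕ) (hN : 3 ≤ N) (α : ℝ) (hα0 : 0 < α) (hαN : α < N)
    (w : EuclideanSpace ℝ (Fin N) → ℝ)
    (hw : ContDiff ℝ 1 w) (hsupp : HasCompactSupport w) :
    ∫ x, ∫ y, ‖x - y‖ ^ (α - N) * w y * (inner ℝ x (gradient w x) : ℝ) ∂volume ∂volume
      = -(((N : ℝ) + α) / 2) * ∫ x, ∫ y, ‖x - y‖ ^ (α - N) * w x * w y ∂volume ∂volume := by
  simpa only [finrank_euclideanSpace_fin] using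
    riesz_kernel_pohozaev_general (μ := volume) hα0 hw hsupp
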